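/- arXiv:2502.18257 — 3 statements merged into one kernel-verified Lean document; each statement's English description precedes it below -/
import Mathlib

section
/- Let R be a Dedekind domain and let I, J be nonzero ideals of R. Then there is an isomorphism of R-modules J ⊕ (I ⊗_R I) ≅ (J ⊗_R I) ⊕ I. -/
theorem aux_tensor {R : Type*} [CommRing R] [IsDedekindDomain R] (D B : Ideal R) :
    Nonempty (TensorProduct R D B ≃ₗ[R] (D * B : Ideal R)) := by
  have h1 := (Module.Flat.iff_lift_lsmul_comp_subtype_injective (R := R) (M := B)).1 inferInstance
  refine ⟨LinearEquiv.ofBijective (Submodule.mulMap' (S := R) D B) ⟨?_, Submodule.mulMap'_surjective D B⟩⟩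
  have h2 := (Subtype.val_injective (p := (· ∈ B))).comp (h1 (IsNoetherian.noetherian D))
  intro x y hxy
  apply h2
  have : ∀ z, (Submodule.mulMap' (S := R) D B z : R) =
      B.subtype (TensorProduct.lift ((LinearMap.lsmul R B).comp D.subtype) z) := by
    intro z
    induction z with
    | zero => simp
    | add a b ha hb => simp only [map_add, Submodule.coe_add, ha, hb]
    | tmul a b => simp
  have h3 := congrArg Subtype.val hxy
  rw [this, this] at h3
  exact h3

theorem aux_coprime {R : Type*} [CommRing R] (D B : Ideal R) (h : D ⊔ B = ⊤) :
    Nonempty ((D × B) ≃ₗ[R] ((D * B : Ideal R) × R)) := by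
  obtain ⟨d, hd, b, hb, hdb⟩ := Submodule.mem_sup.1 ((Ideal.eq_top_iff_one _).1 h)
  let f : (D × B) →ₗ[R] (D * B : Ideal R) :=
    LinearMap.codRestrict (D * B)
      (b • (D.subtype ∘ₗ LinearMap.fst R D B) - d • (B.subtype ∘ₗ LinearMap.snd R D B))
      (fun p => sub_mem (by
        have := Ideal.mul_mem_mul p.1.2 hb
        rw [mul_comm (p.1 : R) b] at this
        exact this) (Ideal.mul_mem_mul hd p.2.2))
  let g : (D × B) →ₗ[R] R := D.subtype ∘ₗ LinearMap.fst R D B + B.subtype ∘ₗ LinearMap.snd R D B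
  have hf : ∀ p, (f p : R) = b * p.1 - d * p.2 := fun p => rfl
  have hg : ∀ p, g p = p.1 + p.2 := fun p => rfl
  refine ⟨LinearEquiv.ofBijective (f.prod g) ⟨?_, ?_⟩⟩
  · intro p q hpq
    have h1 : (f p : R) = f q := congrArg (fun z => (z.1 : R)) hpq
    have h2 : g p = g q := congrArg (fun z => z.2) hpq
    rw [hf, hf] at h1
    rw [hg, hg] at h2
    apply Prod.ext <;> apply Subtype.ext
    · linear_combination h1 + d * h2 - (p.1 - q.1 : R) * hdb
    · linear_combination -h1 + b * h2 - (p.2 - q.2 : R) * hdb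
  · rintro ⟨⟨x, hx⟩, r⟩
    refine ⟨(⟨x + r * d, add_mem (Ideal.mul_le_left (J := B) hx) (D.mul_mem_left _ hd)⟩,
      ⟨-x + r * b, add_mem (neg_mem (Ideal.mul_le_right (I := D) hx)) (B.mul_mem_left _ hb)⟩), ?_⟩
    apply Prod.ext
    · apply Subtype.ext
      change b * (x + r * d) - d * (-x + r * b) = x
      linear_combination x * hdb
    · change (x + r * d) + (-x + r * b) = r
      linear_combination r * hdb

theorem aux_smul {R : Type*} [CommRing R] [IsDomain R] (c : R) (hc : c ≠ 0) (A : Ideal R) :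
    Nonempty (A ≃ₗ[R] (Ideal.span {c} * A : Ideal R)) := by
  refine ⟨LinearEquiv.ofBijective
    (((LinearMap.mulLeft R c).comp A.subtype).codRestrict (Ideal.span {c} * A)
      (fun a => Ideal.mul_mem_mul (Ideal.mem_span_singleton_self c) a.2)) ⟨?_, ?_⟩⟩
  · intro x y hxy
    have h : c * (x : R) = c * (y : R) := congrArg Subtype.val hxy
    exact Subtype.ext (mul_left_cancel₀ hc h)
  · rintro ⟨y, hy⟩
    obtain ⟨z, hz, rfl⟩ := Ideal.mem_span_singleton_mul.1 hy
    exact ⟨⟨z, hz⟩, rfl⟩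

theorem aux_move {R : Type*} [CommRing R] [IsDedekindDomain R] (A B : Ideal R)
    (hA : A ≠ ⊥) (hB : B ≠ ⊥) :
    ∃ D : Ideal R, D ⊔ B = ⊤ ∧ Nonempty (A ≃ₗ[R] D) := by
  obtain ⟨a, haA, ha⟩ := Submodule.exists_mem_ne_zero_of_ne_bot hA
  obtain ⟨C, hC⟩ := Ideal.dvd_iff_le.2 ((Ideal.span_singleton_le_iff_mem A).2 haA)
  have ha' : Ideal.span {a} ≠ (⊥ : Ideal R) := by simpa using ha
  have hC0 : C ≠ 0 := by
    rintro rfl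
    exact ha' (by simpa using hC)
  obtain ⟨c, hc⟩ := IsDedekindDomain.exists_sup_span_eq (I := C * B) (J := C)
    Ideal.mul_le_left (mul_ne_zero hC0 hB)
  by_cases hc0 : c = 0
  · refine ⟨A, ?_, ⟨LinearEquiv.refl R A⟩⟩
    have : C * B = C * 1 := by simpa [hc0] using hc
    rw [mul_left_cancel₀ hC0 this]
    simp
  · have hcC : Ideal.span {c} ≤ C := le_sup_right.trans hc.le
    obtain ⟨D, hD⟩ := Ideal.dvd_iff_le.2 hcC
    refine ⟨D, ?_, ?_⟩
    · apply mul_left_cancel₀ hC0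
      rw [Ideal.mul_sup, ← hD, sup_comm, hc, Ideal.mul_top]
    · obtain ⟨e1⟩ := aux_smul c hc0 A
      obtain ⟨e2⟩ := aux_smul a ha D
      have : Ideal.span {c} * A = Ideal.span {a} * D := by
        rw [hD, hC]; ring
      exact ⟨e1 ≪≫ₗ LinearEquiv.ofEq _ _ this ≪≫ₗ e2.symm⟩

theorem aux_main {R : Type*} [CommRing R] [IsDedekindDomain R] (A B : Ideal R)
    (hA : A ≠ ⊥) (hB : B ≠ ⊥) :
    Nonempty ((A × B) ≃ₗ[R] (TensorProduct R A B × R)) := by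
  obtain ⟨D, hD, ⟨e⟩⟩ := aux_move A B hA hB
  obtain ⟨f⟩ := aux_coprime D B hD
  obtain ⟨g⟩ := aux_tensor D B
  exact ⟨(e.prodCongr (LinearEquiv.refl R B)) ≪≫ₗ f ≪≫ₗ
    ((g.symm ≪≫ₗ TensorProduct.congr e.symm (LinearEquiv.refl R B)).prodCongr
      (LinearEquiv.refl R R))⟩

/-- Let `R` be a Dedekind domain and `I`, `J` nonzero ideals of `R`. Then there is an
isomorphism of `R`-modules `J ⊕ (I ⊗[R] I) ≅ (J ⊗[R] I) ⊕ I`. -/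
theorem stmt_1 (R : Type*) [CommRing R] [IsDedekindDomain R]
    (I J : Ideal R) (hI : I ≠ ⊥) (hJ : J ≠ ⊥) :
    Nonempty ((J × (TensorProduct R I I)) ≃ₗ[R] ((TensorProduct R J I) × I)) := by
  obtain ⟨t⟩ := aux_tensor I I
  obtain ⟨s⟩ := aux_tensor J I
  obtain ⟨f⟩ := aux_main J (I * I) hJ (mul_ne_zero hI hI)
  obtain ⟨g⟩ := aux_main (J * I) I (mul_ne_zero hJ hI) hI
  let m : TensorProduct R J (I * I : Ideal R) ≃ₗ[R] TensorProduct R (J * I : Ideal R) I :=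
    TensorProduct.congr (LinearEquiv.refl R J) t.symm ≪≫ₗ
      (TensorProduct.assoc R J I I).symm ≪≫ₗ
      TensorProduct.congr s (LinearEquiv.refl R I)
  exact ⟨(LinearEquiv.refl R J).prodCongr t ≪≫ₗ f ≪≫ₗ
    m.prodCongr (LinearEquiv.refl R R) ≪≫ₗ g.symm ≪≫ₗ
    s.symm.prodCongr (LinearEquiv.refl R I)⟩
end

section
/- Let S be a principal ideal domain and R = S[x₁, …, xₙ] a polynomial ring over S. Then every finitely generated projective R-module is free. -/
namespace QS
universe u
open Polynomial

/-- An idempotent matrix has free image. -/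
def FreeIdem {R : Type*} [CommRing R] {N : ℕ} (E : Matrix (Fin N) (Fin N) R) : Prop :=
  ∃ (r : ℕ) (V : Matrix (Fin N) (Fin r) R) (W : Matrix (Fin r) (Fin N) R), V * W = E ∧ W * V = 1

/-- All idempotent matrices have free image. -/
def AllFree (R : Type*) [CommRing R] : Prop :=
  ∀ (N : ℕ) (E : Matrix (Fin N) (Fin N) R), E * E = E → FreeIdem E

lemma free_of_allFree {R : Type*} [CommRing R] (h : AllFree R) (M : Type*) [AddCommGroup M]
    [Module R M] [Module.Finite R M] [Module.Projective R M] : Module.Free R M := by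
  obtain ⟨N, g, hg⟩ := Module.Finite.exists_fin' R M
  obtain ⟨s, hs⟩ := Module.projective_lifting_property g LinearMap.id hg
  have hgs : ∀ x, g (s x) = x := fun x => LinearMap.congr_fun hs x
  obtain ⟨r, V, W, hVW, hWV⟩ := h N (LinearMap.toMatrix' (s ∘ₗ g)) (by
    rw [← LinearMap.toMatrix'_comp]
    congr 1
    ext x
    simp [hgs])
  have hVW' : ∀ x, V.mulVec (W.mulVec x) = s (g x) := by
    intro x
    rw [Matrix.mulVec_mulVec, hVW, LinearMap.toMatrix'_mulVec]
    rfl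
  have hWV' : ∀ x, W.mulVec (V.mulVec x) = x := by
    intro x
    rw [Matrix.mulVec_mulVec, hWV, Matrix.one_mulVec]
  refine Module.Free.of_equiv (LinearEquiv.ofLinearMap (g ∘ₗ V.mulVecLin) (W.mulVecLin ∘ₗ s) ?_ ?_)
  · ext x
    simp [hVW', hgs]
  · refine LinearMap.ext fun x => ?_
    simp only [LinearMap.comp_apply, Matrix.mulVecLin_apply, LinearMap.id_apply]
    rw [← hVW', hWV', hWV']

lemma freeIdem_of_free {R : Type*} [CommRing R] [Nontrivial R] {N : ℕ}
    (E : Matrix (Fin N) (Fin N) R) (hE : E * E = E)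
    (h : Module.Free R (LinearMap.range E.mulVecLin)) : FreeIdem E := by
  let b := Module.finBasis R (LinearMap.range E.mulVecLin)
  refine ⟨_, LinearMap.toMatrix' ((LinearMap.range E.mulVecLin).subtype ∘ₗ
      b.equivFun.symm.toLinearMap),
    LinearMap.toMatrix' (b.equivFun.toLinearMap ∘ₗ E.mulVecLin.rangeRestrict), ?_, ?_⟩
  · rw [← LinearMap.toMatrix'_comp]
    apply Matrix.toLin'.injective
    rw [Matrix.toLin'_toMatrix']
    refine LinearMap.ext fun x => ?_
    simp
  · rw [← LinearMap.toMatrix'_comp, ← LinearMap.toMatrix'_id]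
    congr 1
    refine LinearMap.ext fun x => ?_
    simp only [LinearMap.comp_apply, LinearMap.id_apply, LinearEquiv.coe_coe, Submodule.subtype_apply]
    rw [← LinearEquiv.eq_symm_apply]
    apply Subtype.ext
    obtain ⟨z, hz⟩ := (b.equivFun.symm x).2
    rw [LinearMap.codRestrict_apply, ← hz]
    simp [hE]

lemma range_projective {R : Type*} [CommRing R] {N : ℕ}
    (E : Matrix (Fin N) (Fin N) R) (hE : E * E = E) :
    Module.Projective R (LinearMap.range E.mulVecLin) := by
  refine Module.Projective.of_split (LinearMap.range E.mulVecLin).subtype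
    E.mulVecLin.rangeRestrict ?_
  refine LinearMap.ext fun x => ?_
  obtain ⟨z, hz⟩ := x.2
  apply Subtype.ext
  simp only [LinearMap.comp_apply, LinearMap.codRestrict_apply, LinearMap.id_apply,
    Submodule.subtype_apply]
  rw [← hz]
  simp [hE]

lemma allFree_of_pid (R : Type*) [CommRing R] [IsDomain R] [IsPrincipalIdealRing R] :
    AllFree R := fun _ E hE => freeIdem_of_free E hE inferInstance

lemma FreeIdem.map {R R' : Type*} [CommRing R] [CommRing R'] (φ : R →+* R') {N : ℕ}
    {E : Matrix (Fin N) (Fin N) R} (h : FreeIdem E) : FreeIdem (E.map φ) := by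
  obtain ⟨r, V, W, h1, h2⟩ := h
  refine ⟨r, V.map φ, W.map φ, ?_, ?_⟩
  · rw [← Matrix.map_mul, h1]
  · rw [← Matrix.map_mul, h2, Matrix.map_one _ (map_zero φ) (map_one φ)]

lemma AllFree.of_equiv {R R' : Type*} [CommRing R] [CommRing R'] (e : R ≃+* R')
    (h : AllFree R) : AllFree R' := by
  intro N E hE
  have := (h N (E.map (e.symm : R' →+* R)) (by rw [← Matrix.map_mul, hE])).map (e : R →+* R')
  convert this
  ext i j
  simp

lemma FreeIdem.trans {R : Type*} [CommRing R] {N : ℕ} {X Y E F : Matrix (Fin N) (Fin N) R}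
    (hE : E * E = E) (h1 : X * Y = E) (h2 : Y * X = F) (hF : FreeIdem F) : FreeIdem E := by
  obtain ⟨r, V, W, h3, h4⟩ := hF
  refine ⟨r, X * V, W * Y, ?_, ?_⟩
  · calc X * V * (W * Y) = X * (V * W) * Y := by simp only [Matrix.mul_assoc]
      _ = (X * Y) * (X * Y) := by rw [h3, ← h2]; simp only [Matrix.mul_assoc]
      _ = E := by rw [h1, hE]
  · calc W * Y * (X * V) = W * (Y * X) * V := by simp only [Matrix.mul_assoc]
      _ = (W * V) * (W * V) := by rw [h2, ← h3]; simp only [Matrix.mul_assoc]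
      _ = 1 := by rw [h4, Matrix.mul_one]


section local_horrocks
variable {A : Type*} [CommRing A] [IsLocalRing A]

lemma ideal_top (O : Ideal A[X]) (h : A[X]) (hm : h.Monic) (hO : h ∈ O) (g : A[X]) (hg : g ∈ O)
    (hg1 : g.map (IsLocalRing.residue A) = 1) : O = ⊤ := by
  by_contra hne
  obtain ⟨n, hn, hOn⟩ := Ideal.exists_le_maximal O hne
  have hIntegral : (((Ideal.Quotient.mk n).comp C : A →+* A[X] ⧸ n)).IsIntegral := by
    have hX : ((Ideal.Quotient.mk n).comp C : A →+* A[X] ⧸ n).IsIntegralElem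
        (Ideal.Quotient.mk n X) := by
      refine ⟨h, hm, ?_⟩
      rw [← Polynomial.hom_eval₂, Polynomial.eval₂_C_X]
      exact Ideal.Quotient.eq_zero_iff_mem.mpr (hOn hO)
    intro x
    obtain ⟨q, rfl⟩ := Ideal.Quotient.mk_surjective x
    induction q using Polynomial.induction_on' with
    | add p q hp hq => rw [map_add]; exact hp.add _ hq
    | monomial i a =>
      rw [← C_mul_X_pow_eq_monomial, map_mul, map_pow]
      refine RingHom.IsIntegralElem.mul _ ?_ ?_
      · exact RingHom.isIntegralElem_map (f := (Ideal.Quotient.mk n).comp C)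
      · clear hOn hO hg
        induction i with
        | zero => simpa using RingHom.isIntegralElem_one ((Ideal.Quotient.mk n).comp C : A →+* A[X] ⧸ n)
        | succ i ih => rw [pow_succ]; exact ih.mul _ hX
  have hbot : (⊥ : Ideal (A[X] ⧸ n)).IsMaximal := Ideal.bot_quotient_isMaximal_iff n |>.mpr hn
  have := Ideal.isMaximal_comap_of_isIntegral_of_isMaximal' _ hIntegral ⊥
  have hmx := IsLocalRing.eq_maximalIdeal this
  have hle : (IsLocalRing.maximalIdeal A).map C ≤ n := by
    rw [Ideal.map_le_iff_le_comap, ← hmx]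
    intro x hx
    simpa [Ideal.mem_comap, Ideal.Quotient.eq_zero_iff_mem] using hx
  have h1 : g - 1 ∈ (IsLocalRing.maximalIdeal A).map C := by
    rw [Ideal.mem_map_C_iff]
    intro i
    rw [← IsLocalRing.residue_eq_zero_iff, ← Polynomial.coeff_map]
    simp [hg1]
  apply hn.ne_top
  rw [Ideal.eq_top_iff_one]
  have := n.sub_mem (hOn hg) (hle h1)
  simpa using this

lemma rank_one [IsDomain A] [UniqueFactorizationMonoid A] (P : Type*) [AddCommGroup P] [Module A[X] P]
    {N : ℕ} (g : (Fin N → A[X]) →ₗ[A[X]] P) (s : P →ₗ[A[X]] (Fin N → A[X]))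
    (hgs : ∀ x, g (s x) = x)
    (v : P) (w : P →ₗ[A[X]] A[X]) (f : A[X]) (hf : f.Monic)
    (hvw : ∀ x, w x • v = f • x) (hwv : w v = f) : Module.Free A[X] P := by
  classical
  have hf0 := hf.ne_zero
  have hwinj : ∀ x, w x = 0 → x = 0 := by
    intro x hx
    have h1 := hvw x
    rw [hx, zero_smul] at h1
    have h2 : f • s x = 0 := by rw [← map_smul, ← h1, map_zero]
    rw [← hgs x, (smul_eq_zero.mp h2).resolve_left hf0, map_zero]
  obtain ⟨_⟩ : Nonempty (NormalizedGCDMonoid A[X]) := inferInstance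
  let x : Fin N → P := fun i => g (Pi.single i 1)
  have hx : ∀ y, y = ∑ i, s y i • x i := by
    intro y
    conv_lhs => rw [← hgs y, ← Finset.univ_sum_single (s y)]
    rw [map_sum]
    refine Finset.sum_congr rfl fun i _ => ?_
    rw [← map_smul, ← Pi.single_smul, smul_eq_mul, mul_one]
  let d := Finset.univ.gcd (fun i => w (x i))
  have hdvd : ∀ y, d ∣ w y := by
    intro y
    rw [hx y, map_sum]
    refine Finset.dvd_sum fun i _ => ?_
    rw [map_smul, smul_eq_mul]
    exact Dvd.dvd.mul_left (Finset.gcd_dvd (Finset.mem_univ i)) _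
  have hd0 : d ≠ 0 := by
    intro h0
    have := hdvd v
    rw [hwv, h0, zero_dvd_iff] at this
    exact hf0 this
  have hc : ∀ i, ∃ c, d * s v i = f * c := by
    intro i
    change f ∣ d * s v i
    have h1 : f ∣ Finset.univ.gcd (fun j => w (x j) * s v i) := by
      refine Finset.dvd_gcd fun j _ => ?_
      refine ⟨s (x j) i, ?_⟩
      have := congrFun (congrArg s (hvw (x j))) i
      simpa using this
    exact h1.trans (Finset.gcd_mul_right' _ _ _).dvd
  choose c hc using hc
  have hdm : d = w (∑ i, c i • x i) := by
    apply mul_left_cancel₀ hf0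
    rw [← hwv]
    conv_lhs => rw [hx v]
    rw [map_sum, map_sum, Finset.mul_sum, Finset.sum_mul, hwv]
    refine Finset.sum_congr rfl fun i _ => ?_
    simp only [map_smul, smul_eq_mul]
    linear_combination w (x i) * hc i
  refine Module.Free.of_equiv (LinearEquiv.ofBijective
    (LinearMap.toSpanSingleton A[X] P (∑ i, c i • x i)) ⟨?_, ?_⟩)
  · rw [injective_iff_map_eq_zero]
    intro a ha
    have := congrArg w ha
    rw [LinearMap.toSpanSingleton_apply, map_smul, ← hdm, map_zero, smul_eq_mul] at this
    exact (mul_eq_zero.mp this).resolve_right hd0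
  · intro y
    obtain ⟨a, ha⟩ := hdvd y
    refine ⟨a, ?_⟩
    rw [LinearMap.toSpanSingleton_apply, ← sub_eq_zero]
    apply hwinj
    rw [map_sub, map_smul, ← hdm, ha, smul_eq_mul]
    ring

lemma exists_psi (P : Type*) [AddCommGroup P] [Module A[X] P]
    {N : ℕ} (g : (Fin N → A[X]) →ₗ[A[X]] P) (s : P →ₗ[A[X]] (Fin N → A[X]))
    (hgs : ∀ x, g (s x) = x) (ψ₀ : P →ₗ[A[X]] A[X]) (v₀ v₁ : P) (h0 : ψ₀ v₀ = 0)
    (h1 : (ψ₀ v₁).Monic) : ∃ (e : P) (ψ : P →ₗ[A[X]] A[X]),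
      (ψ e).map (IsLocalRing.residue A) = 1 ∧ (ψ v₀).map (IsLocalRing.residue A) = 0 := by
  classical
  let red : A[X] →+* (IsLocalRing.ResidueField A)[X] := mapRingHom (IsLocalRing.residue A)
  have hred : Function.Surjective red :=
    Polynomial.map_surjective _ IsLocalRing.residue_surjective
  let x : Fin N → P := fun i => g (Pi.single i 1)
  have hx : ∀ y, y = ∑ i, s y i • x i := by
    intro y
    conv_lhs => rw [← hgs y, ← Finset.univ_sum_single (s y)]
    rw [map_sum]
    refine Finset.sum_congr rfl fun i _ => ?_
    rw [← map_smul, ← Pi.single_smul, smul_eq_mul, mul_one]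
  let I : Ideal A[X] := LinearMap.range ψ₀
  obtain ⟨d, hd⟩ := (IsPrincipalIdealRing.principal (I.map red)).principal
  have hd' : ∀ y, ∃ c, red (ψ₀ y) = d * red c := by
    intro y
    have : red (ψ₀ y) ∈ I.map red := Ideal.mem_map_of_mem _ ⟨y, rfl⟩
    rw [hd] at this
    obtain ⟨a, ha⟩ := Ideal.mem_span_singleton'.mp this
    obtain ⟨c, rfl⟩ := hred a
    exact ⟨c, by rw [← ha, mul_comm]⟩
  have hd0 : d ≠ 0 := by
    rintro rfl
    obtain ⟨c, hc⟩ := hd' v₁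
    rw [zero_mul] at hc
    exact (h1.map (IsLocalRing.residue A)).ne_zero hc
  obtain ⟨e, he⟩ : ∃ e, red (ψ₀ e) = d := by
    have : d ∈ I.map red := by rw [hd]; exact Ideal.mem_span_singleton_self d
    obtain ⟨y, ⟨e, rfl⟩, hy⟩ := (Ideal.mem_map_iff_of_surjective red hred).mp this
    exact ⟨e, hy⟩
  choose c hc using fun i => hd' (x i)
  let ψ : P →ₗ[A[X]] A[X] := ∑ i, c i • (LinearMap.proj i ∘ₗ s)
  have hψ : ∀ y, d * red (ψ y) = red (ψ₀ y) := by
    intro y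
    conv_rhs => rw [hx y]
    simp only [ψ, LinearMap.sum_apply, LinearMap.smul_apply, LinearMap.comp_apply,
      LinearMap.proj_apply, map_sum, map_smul, smul_eq_mul, map_mul, Finset.mul_sum, hc]
    refine Finset.sum_congr rfl fun i _ => ?_
    ring
  refine ⟨e, ψ, ?_, ?_⟩
  · change red (ψ e) = 1
    apply mul_left_cancel₀ hd0
    rw [hψ, he, mul_one]
  · change red (ψ v₀) = 0
    apply mul_left_cancel₀ hd0
    rw [hψ, h0, map_zero, mul_zero]

theorem horrocks [IsDomain A] [UniqueFactorizationMonoid A] (r : ℕ) : ∀ (P : Type u) [AddCommGroup P] [Module A[X] P]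
    [Module.Finite A[X] P] [Module.Projective A[X] P]
    (v : (Fin r → A[X]) →ₗ[A[X]] P) (w : P →ₗ[A[X]] (Fin r → A[X])) (f : A[X]) (_ : f.Monic)
    (_ : ∀ x, v (w x) = f • x) (_ : ∀ y, w (v y) = f • y), Module.Free A[X] P := by
  classical
  induction r with
  | zero =>
    intro P _ _ _ _ v w f hf hvw hwv
    obtain ⟨N, g, hg⟩ := Module.Finite.exists_fin' A[X] P
    obtain ⟨s, hs⟩ := Module.projective_lifting_property g LinearMap.id hg
    have hgs : ∀ x, g (s x) = x := fun x => LinearMap.congr_fun hs x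
    have : Subsingleton P := by
      refine subsingleton_of_forall_eq 0 fun x => ?_
      have h1 := hvw x
      rw [Subsingleton.elim (w x) 0, map_zero] at h1
      have h2 : f • s x = 0 := by rw [← map_smul, ← h1, map_zero]
      rw [← hgs x, (smul_eq_zero.mp h2).resolve_left hf.ne_zero, map_zero]
    exact Module.Free.of_subsingleton _ _
  | succ r ih =>
    intro P _ _ _ _ v w f hf hvw hwv
    obtain ⟨N, g, hg⟩ := Module.Finite.exists_fin' A[X] P
    obtain ⟨s, hs⟩ := Module.projective_lifting_property g LinearMap.id hg
    have hgs : ∀ x, g (s x) = x := fun x => LinearMap.congr_fun hs x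
    rcases r with _ | r
    · refine rank_one P g s hgs (v (fun _ => 1))
        ((LinearMap.proj 0 : (Fin (0 + 1) → A[X]) →ₗ[A[X]] A[X]) ∘ₗ w) f hf ?_ ?_
      · intro x
        rw [← hvw x, ← map_smul]
        congr 1
        ext i : 1
        rw [Subsingleton.elim (α := Fin 1) i 0]
        simp
      · simp [hwv]
    · obtain ⟨e, ψ, hψ1, hψ0⟩ := exists_psi P g s hgs
        ((LinearMap.proj 1 : (Fin (r + 2) → A[X]) →ₗ[A[X]] A[X]) ∘ₗ w)
        (v (Pi.single 0 1)) (v (Pi.single 1 1)) (by simp [hwv]) (by simpa [hwv] using hf)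
      let n := (w e 0).natDegree + 1
      let p : P := e + (X ^ n : A[X]) • v (Pi.single 0 1)
      let h := w p 0
      have hwp : h = w e 0 + X ^ n * f := by simp [h, p, hwv]
      have hh : h.Monic := by
        rw [hwp]
        refine Monic.add_of_right ((monic_X_pow n).mul hf) ?_
        refine lt_of_le_of_lt degree_le_natDegree ?_
        rw [degree_mul, degree_X_pow, degree_eq_natDegree hf.ne_zero]
        norm_cast
        omega
      obtain ⟨φ, hφ⟩ : ∃ φ : P →ₗ[A[X]] A[X], φ p = 1 := by
        have htop := ideal_top (LinearMap.range (Module.Dual.eval A[X] P p) : Ideal A[X]) h hh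
          ⟨LinearMap.proj 0 ∘ₗ w, rfl⟩ (ψ p) ⟨ψ, rfl⟩ (by
            simp [p, hψ1, hψ0])
        have : (1 : A[X]) ∈ (LinearMap.range (Module.Dual.eval A[X] P p) : Ideal A[X]) := by
          rw [htop]; trivial
        obtain ⟨φ, hφ⟩ := this
        exact ⟨φ, hφ⟩
      let P' := LinearMap.ker φ
      let π : P →ₗ[A[X]] P' := LinearMap.codRestrict P'
        (LinearMap.id - LinearMap.toSpanSingleton A[X] P p ∘ₗ φ) (by
          intro x; simp [P', hφ])
      have hπ : ∀ x, (π x : P) = x - φ x • p := fun x => rfl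
      have hπ' : ∀ x : P', π x = x := by
        intro x
        apply Subtype.ext
        rw [hπ, LinearMap.mem_ker.mp x.2, zero_smul, sub_zero]
      have hπp : π p = 0 := by
        apply Subtype.ext
        rw [hπ, hφ, one_smul, sub_self]; rfl
      have hproj : Module.Projective A[X] P' :=
        Module.Projective.of_split P'.subtype π (LinearMap.ext hπ')
      have hfin : Module.Finite A[X] P' :=
        Module.Finite.of_surjective π (fun x => ⟨x, hπ' x⟩)
      let ι : (Fin (r + 1) → A[X]) →ₗ[A[X]] (Fin (r + 2) → A[X]) :=
        LinearMap.pi (Fin.cons 0 (fun i => LinearMap.proj i))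
      let L : (Fin (r + 2) → A[X]) →ₗ[A[X]] (Fin (r + 1) → A[X]) :=
        LinearMap.pi (fun i => h • LinearMap.proj i.succ - w p i.succ • LinearMap.proj 0)
      have hιL : ∀ u, ι (L u) = h • u - u 0 • w p := by
        intro u
        ext i : 1
        refine Fin.cases ?_ (fun i => ?_) i
        · simp [ι, L, h, mul_comm]
        · simp [ι, L, mul_comm]
      have hLp : L (w p) = 0 := by
        ext i : 1
        simp [L, h, mul_comm]
      have hLι : ∀ y, L (ι y) = h • y := by
        intro y
        ext i : 1
        simp [ι, L]
      have hfree : Module.Free A[X] P' := by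
        refine ih P' (π ∘ₗ v ∘ₗ ι) (L ∘ₗ w ∘ₗ P'.subtype) (h * f) (hh.mul hf) ?_ ?_
        · intro x
          simp only [LinearMap.comp_apply, Submodule.subtype_apply, hιL, map_sub, map_smul, hvw,
            hπp, hπ', smul_zero, sub_zero, mul_smul]
        · intro y
          simp only [LinearMap.comp_apply, Submodule.subtype_apply, hπ, map_sub, map_smul, hwv,
            hLp, hLι, smul_zero, sub_zero, mul_smul]
          rw [smul_comm]
      refine Module.Free.of_equiv (M' := P) (M := A[X] × P') (LinearEquiv.ofLinearMap
        (LinearMap.coprod (LinearMap.toSpanSingleton A[X] P p) P'.subtype)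
        (LinearMap.prod φ π) ?_ ?_)
      · refine LinearMap.ext fun x => ?_
        simp [hπ]
      · refine LinearMap.ext fun x => ?_
        obtain ⟨a, x⟩ := x
        simp [hφ, hπp, hπ', LinearMap.mem_ker.mp x.2]

end local_horrocks
section patching

/-- Idempotent matrices with isomorphic images. -/
def Sim {R : Type*} [CommRing R] {N : ℕ} (E F : Matrix (Fin N) (Fin N) R) : Prop :=
  ∃ P Q : Matrix (Fin N) (Fin N) R, P * Q = E ∧ Q * P = F

lemma Sim.trans {R : Type*} [CommRing R] {N : ℕ} {E F G : Matrix (Fin N) (Fin N) R}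
    (hE : E * E = E) (hG : G * G = G) (hEF : Sim E F) (hFG : Sim F G) : Sim E G := by
  obtain ⟨P, Q, h1, h2⟩ := hEF
  obtain ⟨P', Q', h3, h4⟩ := hFG
  refine ⟨P * P', Q' * Q, ?_, ?_⟩
  · calc P * P' * (Q' * Q) = P * (P' * Q') * Q := by simp only [Matrix.mul_assoc]
      _ = (P * Q) * (P * Q) := by rw [h3, ← h2]; simp only [Matrix.mul_assoc]
      _ = E := by rw [h1, hE]
  · calc Q' * Q * (P * P') = Q' * (Q * P) * P' := by simp only [Matrix.mul_assoc]
      _ = (Q' * P') * (Q' * P') := by rw [h2, ← h3]; simp only [Matrix.mul_assoc]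
      _ = G := by rw [h4, hG]

lemma Sim.map {R R' : Type*} [CommRing R] [CommRing R'] (φ : R →+* R') {N : ℕ}
    {E F : Matrix (Fin N) (Fin N) R} (h : Sim E F) : Sim (E.map φ) (F.map φ) := by
  obtain ⟨P, Q, h1, h2⟩ := h
  exact ⟨P.map φ, Q.map φ, by rw [← Matrix.map_mul, h1], by rw [← Matrix.map_mul, h2]⟩

lemma Sim.symm {R : Type*} [CommRing R] {N : ℕ} {E F : Matrix (Fin N) (Fin N) R}
    (h : Sim E F) : Sim F E := by
  obtain ⟨P, Q, h1, h2⟩ := h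
  exact ⟨Q, P, h2, h1⟩

lemma exists_lift {A L : Type*} [CommRing A] [CommRing L] [Algebra A L] (M : Submonoid A)
    [IsLocalization M L] {κ : Type*} [Finite κ] (q : κ → L[X][X])
    (hq : ∀ k, (q k).coeff 0 ∈ Set.range (mapRingHom (algebraMap A L))) :
    ∃ c ∈ M, ∀ k, ∃ p : A[X][X], p.map (mapRingHom (algebraMap A L)) =
      (q k).comp (C (C (algebraMap A L c)) * X) := by
  let := Polynomial.algebra (R := A) (A := L)
  have h1 := Polynomial.isLocalization M L
  let := Polynomial.algebra (R := A[X]) (A := L[X])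
  have h2 := Polynomial.isLocalization (M.map C) L[X]
  obtain ⟨⟨_, ⟨_, ⟨c, hc, rfl⟩, rfl⟩⟩, hb⟩ :=
    IsLocalization.exist_integer_multiples_of_finite ((M.map C).map C) q
  refine ⟨c, hc, fun k => ?_⟩
  obtain ⟨p, hp⟩ := hb k
  have hp' : p.map (mapRingHom (algebraMap A L)) = C (C (algebraMap A L c)) * q k := by
    refine Eq.trans hp ?_
    rw [Algebra.smul_def]
    congr 1
    change Polynomial.map (mapRingHom (algebraMap A L)) (C (C c)) = _
    simp
  rw [← Polynomial.mem_lifts, Polynomial.lifts_iff_coeff_lifts]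
  intro n
  rw [comp_C_mul_X_coeff]
  rcases n with _ | n
  · simpa using hq k
  · refine ⟨p.coeff (n + 1) * C c ^ n, ?_⟩
    have := congrArg (fun z => coeff z (n + 1)) hp'
    simp only [coeff_map, coeff_C_mul] at this
    rw [map_mul, this, map_pow, coe_mapRingHom, map_C]
    ring

lemma local_sim {A L : Type*} [CommRing A] [CommRing L] [Algebra A L] (M : Submonoid A)
    [IsLocalization M L] (hinj : Function.Injective (algebraMap A L)) {N : ℕ}
    (E : Matrix (Fin N) (Fin N) A[X])
    (hloc : FreeIdem (E.map (mapRingHom (algebraMap A L)))) :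
    ∃ c ∈ M, Sim (E.map (C : A[X] →+* A[X][X]))
      (E.map (eval₂RingHom ((C : A[X] →+* A[X][X]).comp C) (C X + C (C c) * X))) := by
  obtain ⟨r, V, W, hVW, hWV⟩ := hloc
  let i0 : L[X] →+* L[X][X] := C
  let i1 : L[X] →+* L[X][X] := eval₂RingHom ((C : L[X] →+* L[X][X]).comp C) (C X + X)
  have hρ0 : (evalRingHom 0).comp i0 = RingHom.id L[X] := by
    ext <;> simp [i0]
  have hρ1 : (evalRingHom 0).comp i1 = RingHom.id L[X] := by
    ext <;> simp [i1]
  let T := V.map i1 * W.map i0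
  let T' := V.map i0 * W.map i1
  have hW0V0 : W.map i0 * V.map i0 = 1 := by
    rw [← Matrix.map_mul, hWV, Matrix.map_one _ (map_zero i0) (map_one i0)]
  have hW1V1 : W.map i1 * V.map i1 = 1 := by
    rw [← Matrix.map_mul, hWV, Matrix.map_one _ (map_zero i1) (map_one i1)]
  have hTT' : T * T' = (E.map (mapRingHom (algebraMap A L))).map i1 := by
    calc T * T' = V.map i1 * (W.map i0 * V.map i0) * W.map i1 := by
          simp only [T, T', Matrix.mul_assoc]
      _ = _ := by rw [hW0V0, Matrix.mul_one, ← Matrix.map_mul, hVW]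
  have hT'T : T' * T = (E.map (mapRingHom (algebraMap A L))).map i0 := by
    calc T' * T = V.map i0 * (W.map i1 * V.map i1) * W.map i0 := by
          simp only [T, T', Matrix.mul_assoc]
      _ = _ := by rw [hW1V1, Matrix.mul_one, ← Matrix.map_mul, hVW]
  have key : ∀ i j : L[X] →+* L[X][X], (evalRingHom 0).comp i = RingHom.id L[X] →
      (evalRingHom 0).comp j = RingHom.id L[X] →
      (V.map i * W.map j).map (evalRingHom 0) = E.map (mapRingHom (algebraMap A L)) := by
    intro i j hi hj
    rw [Matrix.map_mul, Matrix.map_map, Matrix.map_map, ← RingHom.coe_comp, ← RingHom.coe_comp,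
      hi, hj]
    simpa using hVW
  obtain ⟨c, hc, hlift⟩ := exists_lift (L := L) M
    (Sum.elim (fun k : Fin N × Fin N => T k.1 k.2) (fun k : Fin N × Fin N => T' k.1 k.2)) (by
      rintro (⟨a, b⟩ | ⟨a, b⟩)
      · refine ⟨E a b, ?_⟩
        rw [coeff_zero_eq_eval_zero]
        exact (congrFun (congrFun (key i1 i0 hρ1 hρ0) a) b).symm
      · refine ⟨E a b, ?_⟩
        rw [coeff_zero_eq_eval_zero]
        exact (congrFun (congrFun (key i0 i1 hρ0 hρ1) a) b).symm)
  choose p hp using hlift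
  let Q : Matrix (Fin N) (Fin N) A[X][X] := fun a b => p (Sum.inl (a, b))
  let Q' : Matrix (Fin N) (Fin N) A[X][X] := fun a b => p (Sum.inr (a, b))
  let ι₂ : A[X][X] →+* L[X][X] := mapRingHom (mapRingHom (algebraMap A L))
  have hι₂ : Function.Injective ι₂ :=
    Polynomial.map_injective _ (Polynomial.map_injective _ hinj)
  let σ : L[X][X] →+* L[X][X] := compRingHom (C (C (algebraMap A L c)) * X)
  have hQ : Q.map ι₂ = T.map σ := by
    ext1 a b
    exact hp (Sum.inl (a, b))
  have hQ' : Q'.map ι₂ = T'.map σ := by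
    ext1 a b
    exact hp (Sum.inr (a, b))
  have hcomp0 : (σ.comp i0).comp (mapRingHom (algebraMap A L)) = ι₂.comp C := by
    ext <;> simp [σ, i0, ι₂]
  have hcomp1 : (σ.comp i1).comp (mapRingHom (algebraMap A L)) =
      ι₂.comp (eval₂RingHom ((C : A[X] →+* A[X][X]).comp C) (C X + C (C c) * X)) := by
    ext <;> simp [σ, i1, ι₂]
  refine ⟨c, hc, Q', Q, ?_, ?_⟩
  · apply Matrix.map_injective hι₂
    change (Q' * Q).map ι₂ = (E.map _).map ι₂
    rw [Matrix.map_mul, hQ, hQ', ← Matrix.map_mul, hT'T, Matrix.map_map, Matrix.map_map,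
      Matrix.map_map, ← RingHom.coe_comp, ← RingHom.coe_comp, ← RingHom.coe_comp, ← hcomp0]
  · apply Matrix.map_injective hι₂
    change (Q * Q').map ι₂ = (E.map _).map ι₂
    rw [Matrix.map_mul, hQ, hQ', ← Matrix.map_mul, hTT', Matrix.map_map, Matrix.map_map,
      Matrix.map_map, ← RingHom.coe_comp, ← RingHom.coe_comp, ← RingHom.coe_comp, ← hcomp1]


theorem patch {A : Type u} [CommRing A] [IsDomain A] {N : ℕ} (E : Matrix (Fin N) (Fin N) A[X])
    (hE : E * E = E)
    (hloc : ∀ (m : Ideal A) [m.IsMaximal],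
      FreeIdem (E.map (mapRingHom (algebraMap A (Localization.AtPrime m))))) :
    Sim E (E.map ((C : A →+* A[X]).comp (evalRingHom 0))) := by
  have hid : ∀ {R : Type u} [CommRing R] (φ : A[X] →+* R), E.map φ * E.map φ = E.map φ := by
    intro R _ φ
    rw [← Matrix.map_mul, hE]
  let I : Ideal A :=
    { carrier := {c | ∀ (R : Type u) [CommRing R] (φ : A →+* R) (a r : R),
        Sim (E.map (eval₂RingHom φ a)) (E.map (eval₂RingHom φ (a + φ c * r)))}
      zero_mem' := by
        intro R _ φ a r
        rw [map_zero, zero_mul, add_zero]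
        exact ⟨_, _, hid _, hid _⟩
      add_mem' := by
        intro c d hc hd R _ φ a r
        have h1 := hc R φ a r
        have h2 := hd R φ (a + φ c * r) r
        have h3 := h1.trans (hid _) (hid _) h2
        rwa [add_assoc, ← add_mul, ← map_add] at h3
      smul_mem' := by
        intro b c hc R _ φ a r
        have h1 := hc R φ a (φ b * r)
        rwa [show φ c * (φ b * r) = φ (b • c) * r by rw [smul_eq_mul, map_mul]; ring] at h1 }
  have hI : I = ⊤ := by
    by_contra hne
    obtain ⟨m, hm, hIm⟩ := Ideal.exists_le_maximal I hne
    obtain ⟨c, hc, hs⟩ := local_sim (L := Localization.AtPrime m) m.primeCompl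
      (IsLocalization.injective _ m.primeCompl_le_nonZeroDivisors) E (hloc m)
    apply hc
    apply hIm
    intro R _ φ a r
    have h1 := hs.map (eval₂RingHom (eval₂RingHom φ a) r)
    rw [Matrix.map_map, Matrix.map_map, ← RingHom.coe_comp, ← RingHom.coe_comp] at h1
    convert h1 using 3
    · ext <;> simp
    · ext <;> simp
  have h1 : (1 : A) ∈ I := by rw [hI]; trivial
  have h2 := h1 A[X] C X (-X)
  convert h2 using 1
  · ext i j : 1
    simp
  · congr 2
    ext <;> simp

end patching
section pid
variable (S : Type*) [CommRing S]

/-- The monic polynomials. -/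
def monics : Submonoid S[X] where
  carrier := {p | p.Monic}
  one_mem' := monic_one
  mul_mem' := fun ha hb => Monic.mul ha hb

variable [IsDomain S]

lemma monics_le : monics S ≤ nonZeroDivisors S[X] := fun _ hp =>
  mem_nonZeroDivisors_of_ne_zero (Monic.ne_zero hp)

variable {S} [IsPrincipalIdealRing S]

lemma principal_of_const (q : Ideal S[X]) [hq : q.IsPrime]
    (hmon : ∀ f ∈ q, ¬ f.Monic) (hne : q.comap C ≠ ⊥) : ∃ a, q = Ideal.span {a} := by
  obtain ⟨p, hp⟩ := (IsPrincipalIdealRing.principal (q.comap C)).principal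
  have hprime : (q.comap C).IsPrime := inferInstance
  have hmax : (q.comap C).IsMaximal := IsPrime.to_maximal_ideal hne
  refine ⟨C p, le_antisymm ?_ ?_⟩
  · by_contra hle
    obtain ⟨g, hgq, hg⟩ := SetLike.not_le_iff_exists.mp hle
    let := Ideal.Quotient.field (q.comap C)
    let φ := Ideal.Quotient.mk (q.comap C)
    have hker : ∀ z : S[X], z.map φ = 0 ↔ z ∈ Ideal.span {C p} := by
      intro z
      have : Ideal.span {C p} = (q.comap C).map C := by
        rw [hp]
        change _ = Ideal.map C (Ideal.span {p})
        rw [Ideal.map_span, Set.image_singleton]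
      rw [this, Ideal.mem_map_C_iff, Polynomial.ext_iff]
      simp [φ, Ideal.Quotient.eq_zero_iff_mem]
    have hg0 : g.map φ ≠ 0 := fun h => hg ((hker g).mp h)
    obtain ⟨b, hb⟩ := Ideal.Quotient.mk_surjective (g.map φ).leadingCoeff⁻¹
    have hmonic : ((C b * g).map φ).Monic := by
      rw [Polynomial.map_mul, map_C, mul_comm]
      change (g.map φ * C (Ideal.Quotient.mk _ b)).Monic
      rw [hb]
      exact monic_mul_leadingCoeff_inv hg0
    obtain ⟨g', hg', -, hg'm⟩ := lifts_and_degree_eq_and_monic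
      ((mem_lifts _).mpr ⟨C b * g, rfl⟩) hmonic
    have h1 : g' - C b * g ∈ q := by
      have : g' - C b * g ∈ Ideal.span {C p} := by
        rw [← hker, Polynomial.map_sub, hg', sub_self]
      refine (Ideal.span_singleton_le_iff_mem q).mpr ?_ this
      have : p ∈ q.comap C := by rw [hp]; exact Submodule.mem_span_singleton_self p
      exact this
    refine hmon g' ?_ hg'm
    have := q.add_mem h1 (q.mul_mem_left (C b) hgq)
    simpa using this
  · rw [Ideal.span_singleton_le_iff_mem]
    have : p ∈ q.comap C := by rw [hp]; exact Submodule.mem_span_singleton_self p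
    exact this

lemma principal_of_nonconst (q : Ideal S[X]) [hq : q.IsPrime]
    (hbot : q.comap C = ⊥) : ∃ a, q = Ideal.span {a} := by
  by_cases hq0 : q = ⊥
  · exact ⟨0, by simp [hq0]⟩
  obtain ⟨π, hπq, hπ⟩ := hq.exists_mem_prime_of_ne_bot hq0
  refine ⟨π, ?_⟩
  let K := FractionRing S
  let := Polynomial.algebra (R := S) (A := K)
  have hloc := Polynomial.isLocalization (nonZeroDivisors S) K
  let M := (nonZeroDivisors S).map (C : S →+* S[X])
  have hd : Disjoint (M : Set S[X]) (q : Set S[X]) := by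
    rw [Set.disjoint_left]
    rintro _ ⟨s, hs, rfl⟩ hsq
    have : s ∈ q.comap C := hsq
    rw [hbot] at this
    exact nonZeroDivisors.ne_zero hs this
  have hle : Ideal.span {π} ≤ q := (Ideal.span_singleton_le_iff_mem q).mpr hπq
  have hd' : Disjoint (M : Set S[X]) (Ideal.span {π} : Set S[X]) := hd.mono_right hle
  have hπp : (Ideal.span {π}).IsPrime := Ideal.isPrime_span_singleton_of_prime hπ
  have h1 := IsLocalization.isPrime_of_isPrime_disjoint M K[X] q hq hd
  have h2 := IsLocalization.isPrime_of_isPrime_disjoint M K[X] _ hπp hd'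
  have hinj : Function.Injective (algebraMap S[X] K[X]) :=
    Polynomial.map_injective _ (IsFractionRing.injective S K)
  have hne : (Ideal.span {π}).map (algebraMap S[X] K[X]) ≠ ⊥ := by
    rw [Ne, Ideal.map_eq_bot_iff_of_injective hinj, Ideal.span_singleton_eq_bot]
    exact hπ.ne_zero
  have hmax := IsPrime.to_maximal_ideal hne
  have heq := hmax.eq_of_le h1.ne_top (Ideal.map_mono hle)
  rw [← IsLocalization.under_map_of_isPrime_disjoint M K[X] hq hd,
    ← IsLocalization.under_map_of_isPrime_disjoint M K[X] hπp hd', heq]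

instance : IsDomain (Localization (monics S)) :=
  IsLocalization.isDomain_localization (monics_le S)

instance : IsPrincipalIdealRing (Localization (monics S)) := by
  refine IsPrincipalIdealRing.of_prime fun Q hQ => ?_
  have hq := (IsLocalization.isPrime_iff_isPrime_disjoint (monics S) _ Q).mp hQ
  have hqp := hq.1
  have hex : ∃ a, Q.under S[X] = Ideal.span {a} := by
    by_cases h : (Q.under S[X]).comap C = ⊥
    · exact principal_of_nonconst _ h
    · exact principal_of_const _ (fun f hf hm => Set.disjoint_left.mp hq.2 hm hf) h
  obtain ⟨a, ha⟩ := hex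
  refine ⟨algebraMap _ _ a, ?_⟩
  have := IsLocalization.map_under (monics S) _ Q
  rw [ha, Ideal.map_span, Set.image_singleton] at this
  exact this.symm

end pid
section assembly

lemma FreeIdem.trans' {R : Type*} [CommRing R] {N : ℕ} {E F : Matrix (Fin N) (Fin N) R}
    (hE : E * E = E) (h : Sim E F) (hF : FreeIdem F) : FreeIdem E := by
  obtain ⟨P, Q, h1, h2⟩ := h
  exact FreeIdem.trans hE h1 h2 hF

lemma horrocks_matrix {A : Type*} [CommRing A] [IsLocalRing A] [IsDomain A]
    [UniqueFactorizationMonoid A] {N r : ℕ} (E : Matrix (Fin N) (Fin N) A[X]) (hE : E * E = E)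
    (V : Matrix (Fin N) (Fin r) A[X]) (W : Matrix (Fin r) (Fin N) A[X]) (f : A[X]) (hf : f.Monic)
    (hVW : V * W = f • E) (hWV : W * V = f • (1 : Matrix (Fin r) (Fin r) A[X])) :
    FreeIdem E := by
  have := range_projective E hE
  have hWEV : W * E * V = f • (1 : Matrix (Fin r) (Fin r) A[X]) := by
    have h1 : f • (W * E * V) = f • (f • (1 : Matrix (Fin r) (Fin r) A[X])) := by
      calc f • (W * E * V) = W * (f • E) * V := by
            rw [Matrix.mul_smul, Matrix.smul_mul]
        _ = (W * V) * (W * V) := by rw [← hVW]; simp only [Matrix.mul_assoc]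
        _ = _ := by rw [hWV, Matrix.smul_mul, Matrix.one_mul]
    ext1 i j
    have h2 := congrFun (congrFun h1 i) j
    rw [Matrix.smul_apply, Matrix.smul_apply (f) (f • _)] at h2
    exact mul_left_cancel₀ hf.ne_zero h2
  refine freeIdem_of_free E hE (horrocks r _ (E.mulVecLin.rangeRestrict ∘ₗ V.mulVecLin)
    (W.mulVecLin ∘ₗ (LinearMap.range E.mulVecLin).subtype) f hf ?_ ?_)
  · rintro ⟨_, z, rfl⟩
    apply Subtype.ext
    simp [Matrix.mulVec_mulVec, ← Matrix.mul_assoc]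
    rw [Matrix.mul_assoc E V W, hVW]
    simp [hE, Matrix.smul_mulVec]
  · intro y
    simp [Matrix.mulVec_mulVec, ← Matrix.mul_assoc, hWEV, Matrix.smul_mulVec]

/-- Clearing denominators in a matrix. -/
lemma clear_denom {R L : Type*} [CommRing R] [CommRing L] [Algebra R L] (M : Submonoid R)
    [IsLocalization M L] {a b : ℕ} (V : Matrix (Fin a) (Fin b) L) :
    ∃ c ∈ M, ∃ V' : Matrix (Fin a) (Fin b) R, V'.map (algebraMap R L) = algebraMap R L c • V := by
  obtain ⟨⟨c, hc⟩, hb⟩ := IsLocalization.exist_integer_multiples_of_finite M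
    (fun k : Fin a × Fin b => V k.1 k.2)
  choose p hp using hb
  refine ⟨c, hc, fun i j => p (i, j), ?_⟩
  ext1 i j
  refine (hp (i, j)).trans ?_
  rw [Algebra.smul_def]
  rfl

/-- If the image of an idempotent is free after localization, it is free up to a denominator. -/
lemma almost_free {R L : Type*} [CommRing R] [CommRing L] [Algebra R L] (M : Submonoid R)
    [IsLocalization M L] (hinj : Function.Injective (algebraMap R L)) {N : ℕ}
    (E : Matrix (Fin N) (Fin N) R) (h : FreeIdem (E.map (algebraMap R L))) :
    ∃ (r : ℕ) (V : Matrix (Fin N) (Fin r) R) (W : Matrix (Fin r) (Fin N) R), ∃ c ∈ M,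
      V * W = c • E ∧ W * V = c • (1 : Matrix (Fin r) (Fin r) R) := by
  obtain ⟨r, V, W, hVW, hWV⟩ := h
  obtain ⟨c, hc, V', hV⟩ := clear_denom M V
  obtain ⟨d, hd, W', hW⟩ := clear_denom M W
  refine ⟨r, V', W', c * d, M.mul_mem hc hd, ?_, ?_⟩
  · apply Matrix.map_injective hinj
    change (V' * W').map (algebraMap R L) = ((c * d) • E).map (algebraMap R L)
    rw [Matrix.map_mul, hV, hW, Matrix.smul_mul, Matrix.mul_smul, hVW]
    ext1 i j
    simp only [Matrix.smul_apply, Matrix.map_apply, smul_eq_mul, map_mul]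
    ring
  · apply Matrix.map_injective hinj
    change (W' * V').map (algebraMap R L) = ((c * d) • (1 : Matrix _ _ R)).map (algebraMap R L)
    rw [Matrix.map_mul, hV, hW, Matrix.smul_mul, Matrix.mul_smul, hWV]
    ext1 i j
    by_cases hij : i = j
    · subst hij
      simp only [Matrix.smul_apply, Matrix.map_apply, smul_eq_mul, map_mul, Matrix.one_apply_eq,
        map_one]
      ring
    · simp [hij]

/-- Exchanging the distinguished variable with the others. -/
noncomputable def swapEquiv (S : Type*) [CommRing S] (n : ℕ) :
    MvPolynomial (Fin n) S[X] ≃+* (MvPolynomial (Fin n) S)[X] :=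
  ((MvPolynomial.optionEquivRight S (Fin n)).symm.trans
    (MvPolynomial.optionEquivLeft S (Fin n))).toRingEquiv

lemma swapEquiv_C (S : Type*) [CommRing S] (n : ℕ) (f : S[X]) :
    swapEquiv S n (MvPolynomial.C f) = f.map MvPolynomial.C := by
  have : ((swapEquiv S n : MvPolynomial (Fin n) S[X] →+* (MvPolynomial (Fin n) S)[X]).comp MvPolynomial.C) =
      mapRingHom (MvPolynomial.C : S →+* MvPolynomial (Fin n) S) := by
    ext1
    · ext1 a
      change MvPolynomial.optionEquivLeft S (Fin n)
        ((MvPolynomial.optionEquivRight S (Fin n)).symm (MvPolynomial.C (C a))) = _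
      rw [← MvPolynomial.optionEquivRight_C, AlgEquiv.symm_apply_apply]
      simp
    · change MvPolynomial.optionEquivLeft S (Fin n)
        ((MvPolynomial.optionEquivRight S (Fin n)).symm (MvPolynomial.C X)) = _
      rw [← MvPolynomial.optionEquivRight_X_none, AlgEquiv.symm_apply_apply]
      simp
  exact RingHom.congr_fun this f


theorem main (n : ℕ) : ∀ (S : Type u) [CommRing S] [IsDomain S] [IsPrincipalIdealRing S],
    AllFree (MvPolynomial (Fin n) S) := by
  induction n with
  | zero =>
    intro S _ _ _
    exact (allFree_of_pid S).of_equiv (MvPolynomial.isEmptyRingEquiv S (Fin 0)).symm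
  | succ n ih =>
    intro S _ _ _
    refine AllFree.of_equiv (MvPolynomial.finSuccEquiv S n).symm.toRingEquiv ?_
    intro N E hE
    let κ := swapEquiv S n
    let E' := E.map (κ.symm : (MvPolynomial (Fin n) S)[X] →+* MvPolynomial (Fin n) S[X])
    have hE'κ : E'.map (κ : MvPolynomial (Fin n) S[X] →+* (MvPolynomial (Fin n) S)[X]) = E := by
      ext1 i j
      simp [E']
    have hE' : E' * E' = E' := by rw [← Matrix.map_mul, hE]
    let L := Localization (monics S)
    let _ : Algebra (MvPolynomial (Fin n) S[X]) (MvPolynomial (Fin n) L) :=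
      MvPolynomial.algebraMvPolynomial
    have hinj : Function.Injective
        (algebraMap (MvPolynomial (Fin n) S[X]) (MvPolynomial (Fin n) L)) :=
      MvPolynomial.map_injective _ (IsLocalization.injective _ (monics_le S))
    obtain ⟨r, V, W, _, ⟨f, hf, rfl⟩, hVW, hWV⟩ := almost_free
      (L := MvPolynomial (Fin n) L)
      ((monics S).map (MvPolynomial.C : S[X] →+* MvPolynomial (Fin n) S[X])) hinj E'
      (ih L N _ (by rw [← Matrix.map_mul, hE']))
    refine FreeIdem.trans' hE (patch E hE fun m _ => ?_) ?_
    · let B := Localization.AtPrime m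
      let τ : MvPolynomial (Fin n) S[X] →+* B[X] :=
        (mapRingHom (algebraMap (MvPolynomial (Fin n) S) B)).comp
          (κ : MvPolynomial (Fin n) S[X] →+* (MvPolynomial (Fin n) S)[X])
      have hEτ : E'.map τ = E.map (mapRingHom (algebraMap (MvPolynomial (Fin n) S) B)) := by
        rw [← hE'κ, Matrix.map_map]
        rfl
      have hdom : IsDomain B :=
        IsLocalization.isDomain_localization m.primeCompl_le_nonZeroDivisors
      have hsm : ∀ {a b : ℕ} (c : MvPolynomial (Fin n) S[X]) (Z : Matrix (Fin a) (Fin b) _),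
          (c • Z).map τ = τ c • Z.map τ := by
        intro a b c Z
        ext1 i j
        simp
      refine horrocks_matrix _ ?_ (V.map τ) (W.map τ) (τ (MvPolynomial.C f)) ?_ ?_ ?_
      · rw [← Matrix.map_mul, hE]
      · have : (f.map (MvPolynomial.C : S →+* MvPolynomial (Fin n) S)).Monic := Monic.map _ hf
        have h2 := this.map (algebraMap (MvPolynomial (Fin n) S) B)
        rw [← swapEquiv_C] at h2
        exact h2
      · rw [← Matrix.map_mul, hVW, ← hEτ, hsm]
      · rw [← Matrix.map_mul, hWV]
        refine (hsm _ _).trans ?_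
        rw [Matrix.map_one _ (map_zero τ) (map_one τ)]
    · have h1 := (ih S N (E.map (evalRingHom 0)) (by rw [← Matrix.map_mul, hE])).map
        (C : MvPolynomial (Fin n) S →+* (MvPolynomial (Fin n) S)[X])
      rw [Matrix.map_map] at h1
      exact h1

end assembly

end QS

/-- Quillen–Suslin over a PID: every finitely generated projective module over a
polynomial ring `S[x₁, …, xₙ]` with `S` a principal ideal domain is free. -/
theorem stmt_9 (S : Type*) [CommRing S] [IsDomain S] [IsPrincipalIdealRing S] (n : ℕ)
    (M : Type*) [AddCommGroup M] [Module (MvPolynomial (Fin n) S) M]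
    [Module.Finite (MvPolynomial (Fin n) S) M]
    [Module.Projective (MvPolynomial (Fin n) S) M] :
    Module.Free (MvPolynomial (Fin n) S) M := by
  exact QS.free_of_allFree (QS.main n S) M
end

section
/- Let E, F, G be abelian (or exact) categories and let T: E × F → G be a biexact functor (exact in each variable). Given short exact sequences d: 0 → X → Y → Z → 0 in E and e: 0 → X' → Y' → Z' → 0 in F, the two 2-fold Yoneda extension classes of T(Z, Z') by T(X, X') obtained by splicing — namely [T(X,X') → T(Y,X') → T(Z,Y') → T(Z,Z')] (splicing T(d, X') with T(Z, e)) and [T(X,X') → T(X,Y') → T(Y,Z') → T(Z,Z')] (splicing T(X, e) with T(d, Z')) — are negatives of each other in Ext²(T(Z,Z'), T(X,X')). -/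
open CategoryTheory Limits Abelian

/-- The anticommutation of the two splicings along the corners of a `3 × 3` diagram. -/
lemma splice_anticomm {G : Type*} [Category G] [Abelian G] [HasExt.{w} G]
    {A₁₁ A₁₂ A₁₃ A₂₁ A₂₂ A₂₃ A₃₁ A₃₂ A₃₃ : G}
    (a₁ : A₁₁ ⟶ A₁₂) (a₂ : A₁₂ ⟶ A₁₃) (b₁ : A₂₁ ⟶ A₂₂) (b₂ : A₂₂ ⟶ A₂₃)
    (c₁ : A₃₁ ⟶ A₃₂) (c₂ : A₃₂ ⟶ A₃₃)
    (u₁ : A₁₁ ⟶ A₂₁) (v₁ : A₂₁ ⟶ A₃₁) (u₂ : A₁₂ ⟶ A₂₂) (v₂ : A₂₂ ⟶ A₃₂)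
    (u₃ : A₁₃ ⟶ A₂₃) (v₃ : A₂₃ ⟶ A₃₃)
    (s₁ : u₁ ≫ b₁ = a₁ ≫ u₂) (s₂ : u₂ ≫ b₂ = a₂ ≫ u₃)
    (s₃ : b₁ ≫ v₂ = v₁ ≫ c₁) (s₄ : b₂ ≫ v₃ = v₂ ≫ c₂)
    (zb : b₁ ≫ b₂ = 0) (zv : u₂ ≫ v₂ = 0)
    (z₁ : u₁ ≫ v₁ = 0) (z₂ : c₁ ≫ c₂ = 0) (z₃ : a₁ ≫ a₂ = 0) (z₄ : u₃ ≫ v₃ = 0)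
    (hv : (ShortComplex.mk _ _ zv).ShortExact)
    (h₁ : (ShortComplex.mk _ _ z₁).ShortExact)
    (h₂ : (ShortComplex.mk _ _ z₂).ShortExact)
    (h₃ : (ShortComplex.mk _ _ z₃).ShortExact)
    (h₄ : (ShortComplex.mk _ _ z₄).ShortExact) :
    h₂.extClass.comp h₁.extClass rfl = - (h₄.extClass.comp h₃.extClass rfl) := by
  have m₂ : Mono u₂ := hv.mono_f
  have e₂ : Epi v₂ := hv.epi_g
  have m₁ : Mono c₁ := h₂.mono_f
  have e₁ : Epi v₁ := h₁.epi_g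
  have m₃ : Mono a₁ := h₃.mono_f
  have e₃ : Epi a₂ := h₃.epi_g
  have m₄ : Mono u₃ := h₄.mono_f
  have e₄ : Epi c₂ := h₂.epi_g
  let t : A₂₂ ⟶ A₃₃ := v₂ ≫ c₂
  have et : Epi t := epi_comp _ _
  let i := kernel.ι t
  have hi : i ≫ v₂ ≫ c₂ = 0 := kernel.condition t
  obtain ⟨p, hp⟩ : ∃ p : kernel t ⟶ A₃₁, p ≫ c₁ = i ≫ v₂ :=
    ⟨h₂.exact.lift (i ≫ v₂) (by simpa using hi), h₂.exact.lift_f _ _⟩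
  obtain ⟨q, hq⟩ : ∃ q : kernel t ⟶ A₁₃, q ≫ u₃ = i ≫ b₂ :=
    ⟨h₄.exact.lift (i ≫ b₂) (by simpa [s₄] using hi), h₄.exact.lift_f _ _⟩
  obtain ⟨x, hx⟩ : ∃ x : A₂₁ ⟶ kernel t, x ≫ i = b₁ :=
    ⟨kernel.lift t b₁ (by simp only [t]; rw [reassoc_of% s₃, z₂, comp_zero]), kernel.lift_ι _ _ _⟩
  obtain ⟨y, hy⟩ : ∃ y : A₁₂ ⟶ kernel t, y ≫ i = u₂ :=
    ⟨kernel.lift t u₂ (by simp only [t]; rw [reassoc_of% zv, zero_comp]), kernel.lift_ι _ _ _⟩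
  have xp : x ≫ p = v₁ := by
    rw [← cancel_mono c₁, Category.assoc, hp, reassoc_of% hx, s₃]
  have xq : x ≫ q = 0 := by
    rw [← cancel_mono u₃, Category.assoc, hq, reassoc_of% hx, zb, zero_comp]
  have yp : y ≫ p = 0 := by
    rw [← cancel_mono c₁, Category.assoc, hp, reassoc_of% hy, zv, zero_comp]
  have yq : y ≫ q = a₂ := by
    rw [← cancel_mono u₃, Category.assoc, hq, reassoc_of% hy, s₂]
  have xy : u₁ ≫ x = a₁ ≫ y := by
    rw [← cancel_mono i, Category.assoc, Category.assoc, hx, hy, s₁]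
  have zθ : (a₁ ≫ y) ≫ biprod.lift p q = 0 := by
    ext
    · simp [yp]
    · simp [yq, z₃]
  have my : Mono y := by
    have : Mono (y ≫ i) := by rw [hy]; exact m₂
    exact mono_of_mono y i
  have mf : Mono (a₁ ≫ y) := mono_comp _ _
  have eg : Epi (biprod.lift p q) := by
    have : Epi (biprod.desc x y ≫ biprod.lift p q) := by
      have : biprod.desc x y ≫ biprod.lift p q = biprod.map v₁ a₂ := by
        ext <;> simp [xp, xq, yp, yq]
      rw [this]; infer_instance
    exact epi_of_epi (biprod.desc x y) _
  have hθ : (ShortComplex.mk _ _ zθ).ShortExact := by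
    refine { exact := ?_, mono_f := mf, epi_g := eg }
    apply ShortComplex.exact_of_f_is_kernel
    have key : ∀ {W : G} (k : W ⟶ kernel t), k ≫ biprod.lift p q = 0 →
        ∃ l : W ⟶ A₁₁, l ≫ (a₁ ≫ y) = k := by
      intro W k hk
      have kp : k ≫ p = 0 := by simpa using hk =≫ biprod.fst
      have kq : k ≫ q = 0 := by simpa using hk =≫ biprod.snd
      obtain ⟨m, hm⟩ : ∃ m : W ⟶ A₁₂, m ≫ u₂ = k ≫ i :=
        ⟨hv.exact.lift (k ≫ i) (by
          simp only [Category.assoc]; rw [← hp, reassoc_of% kp, zero_comp]),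
          hv.exact.lift_f _ _⟩
      have hmy : m ≫ y = k := by
        rw [← cancel_mono i, Category.assoc, hy, hm]
      have hma : m ≫ a₂ = 0 := by rw [← yq, reassoc_of% hmy, kq]
      refine ⟨h₃.exact.lift m hma, ?_⟩
      rw [← Category.assoc]
      exact (congrArg (· ≫ y) (h₃.exact.lift_f m hma)).trans hmy
    exact KernelFork.IsLimit.ofι' _ _ (fun k hk => ⟨(key k hk).choose, (key k hk).choose_spec⟩)
  have zκ : i ≫ t = 0 := kernel.condition t
  have hκ : (ShortComplex.mk _ _ zκ).ShortExact :=
    { exact := ShortComplex.exact_of_f_is_kernel _ (kernelIsKernel t)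
      mono_f := inferInstanceAs (Mono (kernel.ι t))
      epi_g := et }
  have n₁ := ShortComplex.ShortExact.extClass_naturality h₁ hθ
    { τ₁ := 𝟙 _, τ₂ := x, τ₃ := biprod.inl
      comm₁₂ := by simp [xy]
      comm₂₃ := by ext <;> simp [xp, xq] }
  have n₃ := ShortComplex.ShortExact.extClass_naturality h₃ hθ
    { τ₁ := 𝟙 _, τ₂ := y, τ₃ := biprod.inr
      comm₁₂ := by simp
      comm₂₃ := by ext <;> simp [yp, yq] }
  have n₂ := ShortComplex.ShortExact.extClass_naturality hκ h₂
    { τ₁ := p, τ₂ := v₂, τ₃ := 𝟙 _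
      comm₁₂ := by simp [hp]
      comm₂₃ := by simp [t] }
  have n₄ := ShortComplex.ShortExact.extClass_naturality hκ h₄
    { τ₁ := q, τ₂ := b₂, τ₃ := 𝟙 _
      comm₁₂ := by simp [hq]
      comm₂₃ := by simp [t, s₄] }
  have n₀ := hθ.comp_extClass
  dsimp only at n₀ n₁ n₂ n₃ n₄
  rw [Ext.comp_mk₀_id] at n₁ n₃
  rw [Ext.mk₀_id_comp] at n₂ n₄
  rw [eq_neg_iff_add_eq_zero, ← n₂, ← n₄, Ext.comp_assoc_of_second_deg_zero,
    Ext.comp_assoc_of_second_deg_zero, ← Ext.comp_add, n₁, n₃,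
    Ext.mk₀_comp_mk₀_assoc, Ext.mk₀_comp_mk₀_assoc, ← Ext.add_comp, ← Ext.mk₀_add,
    ← biprod.lift_eq, n₀, Ext.comp_zero]

/-- Let `T : E × F → G` be a biexact functor of abelian categories. Given short exact
sequences `d : 0 → X → Y → Z → 0` in `E` and `e : 0 → X' → Y' → Z' → 0` in `F`, the two
2-fold Yoneda extension classes of `T(Z,Z')` by `T(X,X')` obtained by splicing — namely
splicing `T(d, X')` with `T(Z, e)`, and splicing `T(X, e)` with `T(d, Z')` — are negatives
of each other in `Ext²(T(Z,Z'), T(X,X'))`. -/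
theorem stmt_18 {E F G : Type*} [Category E] [Category F] [Category G]
    [Abelian E] [Abelian F] [Abelian G] [HasExt.{w} G]
    (T : E ⥤ F ⥤ G)
    -- T is biexact
    (hTl : ∀ X : E, Nonempty (PreservesFiniteLimits (T.obj X)) ∧
      Nonempty (PreservesFiniteColimits (T.obj X)))
    (hTr : ∀ Y : F, Nonempty (PreservesFiniteLimits (T.flip.obj Y)) ∧
      Nonempty (PreservesFiniteColimits (T.flip.obj Y)))
    (S : ShortComplex E) (hS : S.ShortExact)
    (S' : ShortComplex F) (hS' : S'.ShortExact)
    -- the four short exact sequences obtained by applying T in one variable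
    (hz₁ : (T.map S.f).app S'.X₁ ≫ (T.map S.g).app S'.X₁ = 0)
    (hz₂ : (T.obj S.X₃).map S'.f ≫ (T.obj S.X₃).map S'.g = 0)
    (hz₃ : (T.obj S.X₁).map S'.f ≫ (T.obj S.X₁).map S'.g = 0)
    (hz₄ : (T.map S.f).app S'.X₃ ≫ (T.map S.g).app S'.X₃ = 0)
    (h₁ : (ShortComplex.mk _ _ hz₁).ShortExact)
    (h₂ : (ShortComplex.mk _ _ hz₂).ShortExact)
    (h₃ : (ShortComplex.mk _ _ hz₃).ShortExact)
    (h₄ : (ShortComplex.mk _ _ hz₄).ShortExact) :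
    h₂.extClass.comp h₁.extClass rfl = - (h₄.extClass.comp h₃.extClass rfl) := by
  obtain ⟨⟨_⟩, ⟨_⟩⟩ := hTl S.X₂
  obtain ⟨⟨_⟩, ⟨_⟩⟩ := hTr S'.X₂
  have hv := hS.map_of_exact (T.flip.obj S'.X₂)
  exact splice_anticomm ((T.obj S.X₁).map S'.f) ((T.obj S.X₁).map S'.g)
    ((T.obj S.X₂).map S'.f) ((T.obj S.X₂).map S'.g)
    ((T.obj S.X₃).map S'.f) ((T.obj S.X₃).map S'.g)
    ((T.map S.f).app S'.X₁) ((T.map S.g).app S'.X₁)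
    ((T.map S.f).app S'.X₂) ((T.map S.g).app S'.X₂)
    ((T.map S.f).app S'.X₃) ((T.map S.g).app S'.X₃)
    (by simp) (by simp) (by simp) (by simp)
    (by rw [← Functor.map_comp, S'.zero, Functor.map_zero])
    (S.map (T.flip.obj S'.X₂)).zero hz₁ hz₂ hz₃ hz₄ hv h₁ h₂ h₃ h₄
end
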